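/- arXiv:1708.00715 — 2 statements merged into one kernel-verified Lean document; each statement's English description precedes it below -/
import Mathlib

section
/- For λ₁ > 1, λ₂ > 0 and r ∈ [0,1), the integral ∫₀^π sin^{λ₁−1}(t)/(1 + r² − 2r cos t)^{λ₂} dt equals B(λ₁/2, 1/2) · F(λ₂, λ₂ + (1−λ₁)/2; (1+λ₁)/2; r²), where B is the Beta function and F is the Gauss hypergeometric function. -/
open Real Set

/-- The Gauss hypergeometric function `F(a,b;c;x)` as a power series in `x`. -/
noncomputable def hyperF (a b c x : ℝ) : ℝ :=
  ∑' k : ℕ, ((ascPochhammer ℝ k).eval a * (ascPochhammer ℝ k).eval b /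
    (ascPochhammer ℝ k).eval c) * x ^ k / (Nat.factorial k)

/-- The Beta function `B(p,q) = Γ(p)Γ(q)/Γ(p+q)`. -/
noncomputable def betaFn (p q : ℝ) : ℝ := Gamma p * Gamma q / Gamma (p + q)

/-- Binomial type (Vandermonde) identity for rising factorials. -/
theorem ascPochhammer_eval_add_eq_sum (x y : ℝ) (n : ℕ) :
    (ascPochhammer ℝ n).eval (x + y) = ∑ p ∈ Finset.HasAntidiagonal.antidiagonal n,
      (n.choose p.1 : ℝ) * ((ascPochhammer ℝ p.1).eval x * (ascPochhammer ℝ p.2).eval y) := by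
  induction n with
  | zero => simp
  | succ n ih =>
    rw [Finset.sum_antidiagonal_choose_succ_mul
      (fun i j => (ascPochhammer ℝ i).eval x * (ascPochhammer ℝ j).eval y),
      ascPochhammer_succ_eval, ih, Finset.sum_mul, ← Finset.sum_add_distrib]
    refine Finset.sum_congr rfl fun p hp => ?_
    have hp' := Finset.HasAntidiagonal.mem_antidiagonal.mp hp
    have hn : (n : ℝ) = p.1 + p.2 := by rw [← hp']; push_cast; ring
    rw [← Nat.choose_symm_of_eq_add hp'.symm, ascPochhammer_succ_eval, ascPochhammer_succ_eval, hn]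
    ring

theorem ascPochhammer_eval_mul_eval_add (x : ℝ) (m n : ℕ) :
    (ascPochhammer ℝ m).eval x * (ascPochhammer ℝ n).eval (x + m) =
      (ascPochhammer ℝ (m + n)).eval x := by
  rw [← ascPochhammer_mul]
  simp

theorem neg_one_pow_mul_ascPochhammer_eval (x : ℝ) (n : ℕ) :
    (-1) ^ n * (ascPochhammer ℝ n).eval x = (ascPochhammer ℝ n).eval (1 - x - n) := by
  induction n generalizing x with
  | zero => simp
  | succ n ih =>
    rw [ascPochhammer_succ_eval, show (1 - x - (n + 1 : ℕ) : ℝ) = -x - n by push_cast; ring,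
      ascPochhammer_succ_left, Polynomial.eval_mul, Polynomial.eval_X, Polynomial.eval_comp]
    have := ih x
    simp only [Polynomial.eval_add, Polynomial.eval_X, Polynomial.eval_one]
    rw [show (-x - n + 1 : ℝ) = 1 - x - n by ring, ← this]
    ring

/-- The Chu–Vandermonde summation in the form in which it collects powers of `r ^ 2`. -/
theorem sum_antidiagonal_ascPochhammer_div (a c : ℝ) (hc : 0 < c) (n : ℕ) :
    ∑ p ∈ Finset.HasAntidiagonal.antidiagonal n, (-1) ^ p.2 * (ascPochhammer ℝ (n + p.1)).eval a /
      (p.1.factorial * p.2.factorial * (ascPochhammer ℝ p.1).eval c) =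
    (ascPochhammer ℝ n).eval a * (ascPochhammer ℝ n).eval (a - c + 1) /
      (ascPochhammer ℝ n).eval c / n.factorial := by
  rw [show a - c + 1 = (a + n) + (1 - c - n) by ring, ascPochhammer_eval_add_eq_sum,
    Finset.mul_sum, Finset.sum_div, Finset.sum_div]
  refine Finset.sum_congr rfl fun p hp => ?_
  have hp' := Finset.HasAntidiagonal.mem_antidiagonal.mp hp
  have hn : (n : ℝ) = p.1 + p.2 := by rw [← hp']; push_cast; ring
  have hc₁ := (ascPochhammer_pos p.1 c hc).ne'
  have hc₂ := (ascPochhammer_pos p.2 (c + p.1) (by positivity)).ne'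
  have hsplit := ascPochhammer_eval_mul_eval_add c p.1 p.2
  have hneg := neg_one_pow_mul_ascPochhammer_eval (c + p.1) p.2
  have hch : (n.choose p.1 : ℝ) * (p.1.factorial * p.2.factorial) = n.factorial := by
    have := Nat.add_choose_mul_factorial_mul_factorial p.1 p.2
    rw [hp'] at this
    rw [← mul_assoc, Nat.choose_symm_of_eq_add hp'.symm]
    exact_mod_cast this
  rw [hp'] at hsplit
  rw [show (1 - (c + p.1) - p.2 : ℝ) = 1 - c - n by rw [hn]; ring] at hneg
  have hf : (n.factorial : ℝ) ≠ 0 := by positivity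
  have hf₁ : (p.1.factorial : ℝ) ≠ 0 := by positivity
  have hf₂ : (p.2.factorial : ℝ) ≠ 0 := by positivity
  have hf₃ : (n.choose p.1 : ℝ) ≠ 0 := by
    intro h; rw [h, zero_mul] at hch; exact hf hch.symm
  rw [← ascPochhammer_eval_mul_eval_add a n p.1, ← hsplit, ← hneg, ← hch]
  field_simp

/-- `(2i)! = 4 ^ i * i! * (1/2)_i`. -/
theorem factorial_two_mul_eq_ascPochhammer (i : ℕ) :
    ((2 * i).factorial : ℝ) = 4 ^ i * i.factorial * (ascPochhammer ℝ i).eval (1 / 2) := by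
  induction i with
  | zero => simp
  | succ i ih =>
    rw [show 2 * (i + 1) = (2 * i + 1) + 1 by ring, Nat.factorial_succ, Nat.factorial_succ,
      Nat.factorial_succ, ascPochhammer_succ_eval]
    push_cast
    rw [ih]
    ring

/-! ### Binomial series -/

theorem ring_choose_eq_ascPochhammer_div (a : ℝ) (n : ℕ) :
    Ring.choose (a + n - 1) n = (ascPochhammer ℝ n).eval a / n.factorial := by
  rw [← Ring.multichoose_eq, eq_div_iff (by positivity), mul_comm, ← nsmul_eq_mul,
    Ring.factorial_nsmul_multichoose_eq_ascPochhammer, Polynomial.ascPochhammer_smeval_eq_eval]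

theorem hasSum_one_sub_rpow_neg (a x : ℝ) (hx : |x| < 1) :
    HasSum (fun n : ℕ => (ascPochhammer ℝ n).eval a / n.factorial * x ^ n) ((1 - x) ^ (-a)) := by
  have h := (Real.one_div_one_sub_rpow_hasFPowerSeriesOnBall_zero a).hasSum (y := x)
    (by simpa [enorm_eq_nnnorm, ← NNReal.coe_lt_coe] using hx)
  have hpos : 0 ≤ 1 - x := by linarith [(abs_lt.mp hx).2]
  simpa [ring_choose_eq_ascPochhammer_div, Real.rpow_neg hpos, mul_comm] using h

theorem hasSum_one_sub_cpow_neg (a : ℝ) (z : ℂ) (hz : ‖z‖ < 1) :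
    HasSum (fun n : ℕ => (((ascPochhammer ℝ n).eval a / n.factorial : ℝ) : ℂ) * z ^ n)
      ((1 - z) ^ (-(a : ℂ))) := by
  have h := (Complex.one_div_one_sub_cpow_hasFPowerSeriesOnBall_zero a).hasSum (y := z)
    (by simpa [enorm_eq_nnnorm, ← NNReal.coe_lt_coe] using hz)
  have hch (n : ℕ) : Ring.choose ((a : ℂ) + n - 1) n =
      (((ascPochhammer ℝ n).eval a / n.factorial : ℝ) : ℂ) := by
    rw [← ring_choose_eq_ascPochhammer_div, Complex.ofReal_choose]
    push_cast
    rfl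
  simpa [hch, Complex.cpow_neg, mul_comm] using h

/-! ### Integrals of `sin ^ α * cos ^ k` -/

theorem integral_sin_rpow_eq_beta (s : ℝ) (hs : 0 < s) :
    ∫ t in (0:ℝ)..π, sin t ^ (2 * s - 1) = betaFn s (1 / 2) := by
  have himg : (fun t => (1 - cos t) / 2) '' Ioo 0 π = Ioo (0:ℝ) 1 := by
    ext x
    constructor
    · rintro ⟨t, ht, rfl⟩
      have h₁ := Real.cos_lt_cos_of_nonneg_of_le_pi le_rfl ht.2.le ht.1
      have h₂ := Real.cos_lt_cos_of_nonneg_of_le_pi ht.1.le le_rfl ht.2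
      simp only [Real.cos_zero, Real.cos_pi] at h₁ h₂
      constructor <;> simp only <;> linarith
    · rintro ⟨h0, h1⟩
      refine ⟨Real.arccos (1 - 2 * x), ⟨Real.arccos_pos.mpr (by linarith), ?_⟩, ?_⟩
      · refine lt_of_le_of_ne (Real.arccos_le_pi _) fun h => ?_
        rw [Real.arccos_eq_pi] at h
        linarith
      · simp only
        rw [Real.cos_arccos (by linarith) (by linarith)]
        ring
  have hinj : InjOn (fun t => (1 - cos t) / 2) (Ioo 0 π) := fun x hx y hy hxy => by
    refine Real.injOn_cos (Ioo_subset_Icc_self hx) (Ioo_subset_Icc_self hy) ?_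
    simp only at hxy
    linarith
  have hderiv : ∀ t ∈ Ioo (0:ℝ) π,
      HasDerivWithinAt (fun t => (1 - cos t) / 2) (sin t / 2) (Ioo 0 π) t := fun t _ => by
    have := ((Real.hasDerivAt_cos t).const_sub 1).div_const 2
    simpa using this.hasDerivWithinAt
  have hsub := MeasureTheory.integral_image_eq_integral_abs_deriv_smul measurableSet_Ioo hderiv hinj
    (fun x => x ^ (s - 1) * (1 - x) ^ (s - 1))
  rw [himg] at hsub
  have hbeta : ∫ x in Ioo (0:ℝ) 1, x ^ (s - 1) * (1 - x) ^ (s - 1) =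
      Gamma s * Gamma s / Gamma (s + s) := by
    have hB := Complex.betaIntegral_eq_Gamma_mul_div s s (by simpa) (by simpa)
    rw [Complex.betaIntegral, intervalIntegral.integral_of_le zero_le_one,
      MeasureTheory.integral_Ioc_eq_integral_Ioo, ← Complex.ofReal_add, Complex.Gamma_ofReal,
      Complex.Gamma_ofReal] at hB
    have : ∫ x in Ioo (0:ℝ) 1, (x : ℂ) ^ ((s : ℂ) - 1) * (1 - (x : ℂ)) ^ ((s : ℂ) - 1) =
        ((∫ x in Ioo (0:ℝ) 1, x ^ (s - 1) * (1 - x) ^ (s - 1) : ℝ) : ℂ) := by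
      rw [← integral_complex_ofReal]
      refine MeasureTheory.setIntegral_congr_fun measurableSet_Ioo fun x hx => ?_
      rw [Complex.ofReal_mul, Complex.ofReal_cpow hx.1.le, Complex.ofReal_cpow (by linarith [hx.2])]
      push_cast
      rfl
    rw [this] at hB
    exact_mod_cast hB
  have hint : ∫ t in Ioo (0:ℝ) π, |sin t / 2| •
      (((1 - cos t) / 2) ^ (s - 1) * (1 - (1 - cos t) / 2) ^ (s - 1)) =
      2 ^ (1 - 2 * s) * ∫ t in Ioo (0:ℝ) π, sin t ^ (2 * s - 1) := by
    rw [← MeasureTheory.integral_const_mul]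
    refine MeasureTheory.setIntegral_congr_fun measurableSet_Ioo fun t ht => ?_
    have hsin := Real.sin_pos_of_mem_Ioo ht
    have h₁ := Real.cos_le_one t
    have h₂ := Real.neg_one_le_cos t
    simp only [smul_eq_mul]
    rw [← Real.mul_rpow (by linarith) (by linarith),
      show (1 - cos t) / 2 * (1 - (1 - cos t) / 2) = (sin t / 2) ^ (2 : ℝ) by
        rw [Real.rpow_two]; nlinarith [Real.sin_sq_add_cos_sq t],
      ← Real.rpow_mul (by positivity), abs_of_pos (by positivity),
      mul_comm, ← Real.rpow_add_one (by positivity),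
      show 2 * (s - 1) + 1 = 2 * s - 1 by ring, Real.div_rpow hsin.le zero_le_two,
      show 1 - 2 * s = -(2 * s - 1) by ring, Real.rpow_neg zero_le_two]
    ring
  rw [hint, hbeta] at hsub
  have hdup := Real.Gamma_mul_Gamma_add_half s
  rw [intervalIntegral.integral_of_le Real.pi_pos.le, MeasureTheory.integral_Ioc_eq_integral_Ioo,
    betaFn, Real.Gamma_one_half_eq]
  have hG := (Real.Gamma_pos_of_pos hs).ne'
  have hG₁ := (Real.Gamma_pos_of_pos (show 0 < s + 1 / 2 by linarith)).ne'
  have hG₂ := (Real.Gamma_pos_of_pos (show 0 < 2 * s by linarith)).ne'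
  have h2 : (2 : ℝ) ^ (1 - 2 * s) ≠ 0 := by positivity
  rw [← two_mul] at hsub
  set K := ∫ t in Ioo (0:ℝ) π, sin t ^ (2 * s - 1)
  rw [eq_div_iff hG₁]
  rw [div_eq_iff hG₂] at hsub
  have : Gamma s * 2 ^ (1 - 2 * s) * Gamma (2 * s) * (K * Gamma (s + 1 / 2)) =
      Gamma s * 2 ^ (1 - 2 * s) * Gamma (2 * s) * (Gamma s * √π) := by
    linear_combination (-Gamma s * Gamma (s + 1 / 2)) * hsub + Gamma s * Gamma s * hdup
  exact mul_left_cancel₀ (by positivity) this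

theorem continuous_sin_rpow {α : ℝ} (hα : 0 ≤ α) : Continuous fun t => sin t ^ α :=
  Real.continuous_sin.rpow_const fun _ => Or.inr hα

theorem integral_sin_rpow_mul_cos_pow_succ_succ {α : ℝ} (hα : 0 ≤ α) (k : ℕ) :
    (α + k + 2) * ∫ t in (0:ℝ)..π, sin t ^ α * cos t ^ (k + 2) =
      (k + 1) * ∫ t in (0:ℝ)..π, sin t ^ α * cos t ^ k := by
  have hderiv : ∀ t ∈ uIcc 0 π, HasDerivAt (fun t => sin t ^ (α + 1) * cos t ^ (k + 1))
      ((α + k + 2) * (sin t ^ α * cos t ^ (k + 2)) - (k + 1) * (sin t ^ α * cos t ^ k)) t := by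
    intro t ht
    rw [uIcc_of_le Real.pi_pos.le] at ht
    have h₁ := (Real.hasDerivAt_sin t).rpow_const (p := α + 1) (Or.inr (by linarith))
    have h₂ := (Real.hasDerivAt_cos t).pow (k + 1)
    refine (h₁.mul h₂).congr_deriv ?_
    rw [Pi.pow_apply, add_sub_cancel_right, Real.rpow_add_one' (Real.sin_nonneg_of_mem_Icc ht) (by linarith)]
    push_cast
    have hsq : sin t * sin t = 1 - cos t ^ 2 := by rw [← Real.sin_sq]; ring
    linear_combination (-(k + 1) * sin t ^ α * cos t ^ k) * hsq
  have hc (m : ℕ) : Continuous fun t => sin t ^ α * cos t ^ m :=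
    (continuous_sin_rpow hα).mul (Real.continuous_cos.pow m)
  have hI := intervalIntegral.integral_eq_sub_of_hasDerivAt hderiv
    ((((hc _).const_mul _).sub ((hc _).const_mul _)).intervalIntegrable _ _)
  rw [intervalIntegral.integral_sub (((hc _).const_mul _).intervalIntegrable _ _)
    (((hc _).const_mul _).intervalIntegrable _ _), intervalIntegral.integral_const_mul,
    intervalIntegral.integral_const_mul] at hI
  simp only [Real.sin_pi, Real.sin_zero, Real.zero_rpow (show α + 1 ≠ 0 by linarith), zero_mul,
    sub_zero] at hI
  linarith

theorem integral_sin_rpow_mul_cos_pow_odd (α : ℝ) (i : ℕ) :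
    ∫ t in (0:ℝ)..π, sin t ^ α * cos t ^ (2 * i + 1) = 0 := by
  have h := intervalIntegral.integral_comp_sub_left
    (fun t => sin t ^ α * cos t ^ (2 * i + 1)) π (a := 0) (b := π)
  simp only [Real.sin_pi_sub, Real.cos_pi_sub, sub_self, sub_zero,
    Odd.neg_pow (odd_two_mul_add_one i), mul_neg, intervalIntegral.integral_neg] at h
  linarith

theorem integral_sin_rpow_mul_cos_pow_even {α : ℝ} (hα : 0 ≤ α) (i : ℕ) :
    ∫ t in (0:ℝ)..π, sin t ^ α * cos t ^ (2 * i) =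
      betaFn ((α + 1) / 2) (1 / 2) *
        ((ascPochhammer ℝ i).eval (1 / 2) / (ascPochhammer ℝ i).eval (1 + α / 2)) := by
  induction i with
  | zero =>
    have := integral_sin_rpow_eq_beta ((α + 1) / 2) (by linarith)
    rw [show 2 * ((α + 1) / 2) - 1 = α by ring] at this
    simpa using this
  | succ i ih =>
    have h := integral_sin_rpow_mul_cos_pow_succ_succ hα (2 * i)
    rw [ih] at h
    have hp := (ascPochhammer_pos i (1 + α / 2) (by positivity)).ne'
    have hne : (1 + α / 2 + i : ℝ) ≠ 0 := by positivity
    have hne' : (α + (2 * i : ℕ) + 2 : ℝ) ≠ 0 := by positivity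
    refine mul_left_cancel₀ hne' ?_
    rw [show 2 * (i + 1) = 2 * i + 2 by ring, h, ascPochhammer_succ_eval, ascPochhammer_succ_eval]
    push_cast
    field_simp
    ring

/-! ### Double series -/

/-- Summing a doubly indexed series along antidiagonals. -/
theorem HasSum.sum_antidiagonal {f : ℕ × ℕ → ℝ} {s : ℝ} (h : HasSum f s) :
    HasSum (fun n => ∑ p ∈ Finset.HasAntidiagonal.antidiagonal n, f p) s := by
  rw [← Finset.HasAntidiagonal.sigmaAntidiagonalEquivProd.hasSum_iff] at h
  refine h.sigma fun n => ?_
  exact Finset.hasSum (Finset.HasAntidiagonal.antidiagonal n) f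

theorem sum_antidiagonal_ascPochhammer_mul_pow (a u v : ℝ) (n : ℕ) :
    ∑ p ∈ Finset.HasAntidiagonal.antidiagonal n, (ascPochhammer ℝ (p.1 + p.2)).eval a /
      (p.1.factorial * p.2.factorial) * (u ^ p.1 * v ^ p.2) =
    (ascPochhammer ℝ n).eval a / n.factorial * (u + v) ^ n := by
  rw [(Commute.all u v).add_pow', Finset.mul_sum]
  refine Finset.sum_congr rfl fun p hp => ?_
  have hp' := Finset.HasAntidiagonal.mem_antidiagonal.mp hp
  have hch : (n.choose p.1 : ℝ) * p.1.factorial * p.2.factorial = n.factorial := by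
    have := Nat.add_choose_mul_factorial_mul_factorial p.1 p.2
    rw [hp'] at this
    rw [Nat.choose_symm_of_eq_add hp'.symm]
    exact_mod_cast this
  rw [hp', nsmul_eq_mul, ← hch]
  have hf₃ : (n.choose p.1 : ℝ) ≠ 0 := by
    intro h
    rw [h, zero_mul, zero_mul] at hch
    exact (Nat.cast_ne_zero.mpr n.factorial_ne_zero) hch.symm
  have hf₁ : (p.1.factorial : ℝ) ≠ 0 := by positivity
  have hf₂ : (p.2.factorial : ℝ) ≠ 0 := by positivity
  field_simp

theorem summable_ascPochhammer_mul_pow_mul_pow {a u v : ℝ} (ha : 0 < a) (hu : 0 ≤ u) (hv : 0 ≤ v)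
    (huv : u + v < 1) :
    Summable fun p : ℕ × ℕ => (ascPochhammer ℝ (p.1 + p.2)).eval a /
      (p.1.factorial * p.2.factorial) * (u ^ p.1 * v ^ p.2) := by
  rw [← Finset.HasAntidiagonal.sigmaAntidiagonalEquivProd.summable_iff]
  refine (summable_sigma_of_nonneg fun p => ?_).mpr ⟨fun n => ?_, ?_⟩
  · have := ascPochhammer_pos (p.2.1.1 + p.2.1.2) a ha
    simp only [Function.comp_apply, Finset.HasAntidiagonal.sigmaAntidiagonalEquivProd_apply]
    positivity
  · exact Summable.of_finite
  · refine (hasSum_one_sub_rpow_neg a (u + v) ?_).summable.congr fun n => ?_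
    · rw [abs_of_nonneg (by positivity)]; exact huv
    · rw [← sum_antidiagonal_ascPochhammer_mul_pow]
      exact ((Finset.hasSum (Finset.HasAntidiagonal.antidiagonal n) (fun p : ℕ × ℕ =>
        (ascPochhammer ℝ (p.1 + p.2)).eval a /
        (p.1.factorial * p.2.factorial) * (u ^ p.1 * v ^ p.2))).tsum_eq).symm

theorem hasSum_one_sub_sub_rpow_neg {a u v : ℝ} (ha : 0 < a) (huv : |u| + |v| < 1) :
    HasSum (fun p : ℕ × ℕ => (ascPochhammer ℝ (p.1 + p.2)).eval a /
      (p.1.factorial * p.2.factorial) * (u ^ p.1 * v ^ p.2)) ((1 - (u + v)) ^ (-a)) := by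
  have hs : Summable (fun p : ℕ × ℕ => (ascPochhammer ℝ (p.1 + p.2)).eval a /
      (p.1.factorial * p.2.factorial) * (u ^ p.1 * v ^ p.2)) := by
    refine (summable_ascPochhammer_mul_pow_mul_pow ha (abs_nonneg u) (abs_nonneg v)
      huv).of_norm_bounded fun p => le_of_eq ?_
    have := ascPochhammer_pos (p.1 + p.2) a ha
    rw [norm_mul, Real.norm_of_nonneg (by positivity), norm_mul, norm_pow, norm_pow]
    rfl
  have h := hs.hasSum.sum_antidiagonal
  simp only [sum_antidiagonal_ascPochhammer_mul_pow] at h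
  have h' := hasSum_one_sub_rpow_neg a (u + v) ((abs_add_le u v).trans_lt huv)
  rw [← h.unique h']
  exact hs.hasSum

theorem norm_one_sub_mul_exp_sq (r t : ℝ) :
    ‖1 - (r : ℂ) * Complex.exp (t * Complex.I)‖ ^ 2 = 1 + r ^ 2 - 2 * r * cos t := by
  rw [← Complex.normSq_eq_norm_sq, Complex.exp_mul_I, ← Complex.ofReal_cos, ← Complex.ofReal_sin,
    Complex.normSq_apply]
  simp only [Complex.sub_re, Complex.sub_im, Complex.mul_re, Complex.mul_im, Complex.add_re,
    Complex.add_im, Complex.ofReal_re, Complex.ofReal_im, Complex.I_re, Complex.I_im,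
    Complex.one_re, Complex.one_im]
  linear_combination r ^ 2 * Real.sin_sq_add_cos_sq t

theorem re_cpow_mul_conj (w : ℂ) (a : ℝ) :
    (w ^ (a : ℂ) * starRingEnd ℂ (w ^ (a : ℂ))).re = (‖w‖ ^ 2) ^ a := by
  rw [Complex.mul_conj, Complex.ofReal_re, Complex.normSq_eq_norm_sq,
    Complex.norm_cpow_real, ← Real.rpow_mul_natCast (norm_nonneg _), mul_comm,
    Real.rpow_natCast_mul (norm_nonneg _)]

theorem mul_exp_pow_mul_conj (r t : ℝ) (m n : ℕ) :
    ((r : ℂ) * Complex.exp (t * Complex.I)) ^ m *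
      starRingEnd ℂ (((r : ℂ) * Complex.exp (t * Complex.I)) ^ n) =
      ((r ^ (m + n) : ℝ) : ℂ) * Complex.exp (((m - n) * t : ℝ) * Complex.I) := by
  rw [map_pow, map_mul, Complex.conj_ofReal, ← Complex.exp_conj, mul_pow,
    mul_pow, ← Complex.exp_nat_mul, ← Complex.exp_nat_mul, map_mul, Complex.conj_ofReal,
    Complex.conj_I, mul_mul_mul_comm, ← Complex.exp_add, ← pow_add, Complex.ofReal_pow]
  congr 2
  push_cast
  ring

theorem hasSum_re_mul {f g : ℕ → ℂ} {s t : ℂ} (hf : HasSum f s) (hg : HasSum g t) :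
    HasSum (fun p : ℕ × ℕ => (f p.1 * g p.2).re) (s * t).re :=
  Complex.hasSum_re
    (hf.mul hg (summable_mul_of_summable_norm hf.summable.norm hg.summable.norm))

/-- The generating function `|1 - r e^{it}|^{-2a}`, expanded as a product of two binomial series. -/
theorem hasSum_poisson_rpow_neg (a : ℝ) {r : ℝ} (hr : |r| < 1) (t : ℝ) :
    HasSum (fun p : ℕ × ℕ => (ascPochhammer ℝ p.1).eval a / p.1.factorial *
      ((ascPochhammer ℝ p.2).eval a / p.2.factorial) * (cos ((p.1 - p.2) * t) * r ^ (p.1 + p.2)))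
      ((1 + r ^ 2 - 2 * r * cos t) ^ (-a)) := by
  have hval := re_cpow_mul_conj (1 - (r : ℂ) * Complex.exp (t * Complex.I)) (-a)
  rw [norm_one_sub_mul_exp_sq, Complex.ofReal_neg] at hval
  have hexp := mul_exp_pow_mul_conj r t
  have hzn : ‖(r : ℂ) * Complex.exp (t * Complex.I)‖ < 1 := by
    rw [norm_mul, Complex.norm_exp_ofReal_mul_I, mul_one, Complex.norm_real]
    exact hr
  generalize (r : ℂ) * Complex.exp (t * Complex.I) = z at hval hexp hzn
  have h₁ := hasSum_one_sub_cpow_neg a z hzn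
  have hmul (x y : ℝ) (m n : ℕ) : ((x * z ^ m) * starRingEnd ℂ (y * z ^ n)).re =
      x * y * (cos ((m - n) * t) * r ^ (m + n)) := by
    have : (x * z ^ m) * starRingEnd ℂ (y * z ^ n) = ((x * y * r ^ (m + n) : ℝ) : ℂ) *
        Complex.exp (((m - n) * t : ℝ) * Complex.I) := by
      rw [Complex.ofReal_mul, mul_assoc (Complex.ofReal (x * y)), ← hexp, map_mul,
        Complex.conj_ofReal, Complex.ofReal_mul]
      ring
    rw [this, Complex.re_ofReal_mul, Complex.exp_ofReal_mul_I_re]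
    ring
  rw [← hval]
  simpa only [hmul] using hasSum_re_mul h₁ (Complex.hasSum_conj'.mpr h₁)

/-- Integrating a series dominated by a summable sequence against a continuous weight. -/
theorem hasSum_integral_mul_of_abs_le {ι : Type*} [Countable ι] {a b : ℝ} {w F : ℝ → ℝ}
    {f : ι → ℝ → ℝ} {c : ι → ℝ} (hw : Continuous w) (hf : ∀ i, Continuous (f i))
    (hc : Summable c) (hfc : ∀ i t, |f i t| ≤ c i) (hF : ∀ t, HasSum (fun i => f i t) (F t)) :
    HasSum (fun i => ∫ t in a..b, w t * f i t) (∫ t in a..b, w t * F t) := by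
  refine intervalIntegral.hasSum_integral_of_dominated_convergence (fun i t => |w t| * c i)
    (fun i => (hw.mul (hf i)).aestronglyMeasurable) (fun i => ?_) ?_ ?_ ?_
  · refine Filter.Eventually.of_forall fun t _ => ?_
    rw [norm_mul]
    exact mul_le_mul_of_nonneg_left (hfc i t) (abs_nonneg _)
  · exact Filter.Eventually.of_forall fun t _ => hc.mul_left _
  · simp only [tsum_mul_left]
    exact (hw.abs.mul continuous_const).intervalIntegrable _ _
  · exact Filter.Eventually.of_forall fun t _ => (hF t).mul_left _

/-- The coefficients of a power series converging near zero are determined by its sum. -/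
theorem eq_of_hasSum_pow {d e : ℕ → ℝ} {f : ℝ → ℝ} {ρ : ℝ} (hρ : 0 < ρ)
    (hd : ∀ r, |r| < ρ → HasSum (fun n => d n * r ^ n) (f r))
    (he : ∀ r, |r| < ρ → HasSum (fun n => e n * r ^ n) (f r)) : d = e := by
  have key : ∀ g : ℕ → ℝ, (∀ r, |r| < ρ → HasSum (fun n => g n * r ^ n) (f r)) →
      HasFPowerSeriesAt f (FormalMultilinearSeries.ofScalars ℝ g) 0 := by
    intro g hg
    refine ⟨ENNReal.ofReal (ρ / 2), ?_, by simpa using hρ, fun {y} hy => ?_⟩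
    · refine FormalMultilinearSeries.le_radius_of_summable _ ?_
      have := (hg (ρ / 2) (by rw [abs_of_pos (by positivity)]; linarith)).summable.norm
      refine this.congr fun n => ?_
      rw [FormalMultilinearSeries.ofScalars_norm, norm_mul, norm_pow,
        Real.norm_of_nonneg (show 0 ≤ ρ / 2 by positivity), Real.coe_toNNReal _ (by positivity)]
    · have hy' : |y| < ρ / 2 := by
        rw [Metric.eball_ofReal, Metric.mem_ball, dist_zero_right] at hy
        exact hy
      simpa [mul_comm] using hg y (by linarith)
  exact FormalMultilinearSeries.ofScalars_series_injective ℝ ℝ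
    ((key d hd).eq_formalMultilinearSeries (key e he))

/-- If a function has a power series on `(-1, 1)` which near zero is a power series in `r ^ 2`, then
it is given by that power series in `r ^ 2` on all of `(-1, 1)`. -/
theorem hasSum_even_of_hasSum {d e : ℕ → ℝ} {f : ℝ → ℝ} {ρ : ℝ} (hρ : 0 < ρ) (hρ₁ : ρ ≤ 1)
    (hd : ∀ r, |r| < 1 → HasSum (fun n => d n * r ^ n) (f r))
    (he : ∀ r, |r| < ρ → HasSum (fun n => e n * r ^ (2 * n)) (f r)) {r : ℝ} (hr : |r| < 1) :
    HasSum (fun n => e n * r ^ (2 * n)) (f r) := by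
  have hinj : Function.Injective fun n : ℕ => 2 * n := fun m n h => by simpa using h
  have key (r : ℝ) : HasSum (fun n => e n * r ^ (2 * n)) (f r) ↔
      HasSum (fun n => (if Even n then e (n / 2) else 0) * r ^ n) (f r) := by
    rw [← hinj.hasSum_iff (f := fun n => (if Even n then e (n / 2) else 0) * r ^ n)]
    · simp [Function.comp_def]
    · intro n hn
      rw [if_neg fun h => hn ⟨n / 2, Nat.two_mul_div_two_of_even h⟩, zero_mul]
  have hde := eq_of_hasSum_pow hρ (fun r hr => hd r (hr.trans_le hρ₁))
    (fun r hr => (key r).mp (he r hr))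
  rw [key]
  simpa only [hde] using hd r hr

/-! ### The power series of the integral -/

theorem exists_hasSum_integral_sin_rpow_mul {α a : ℝ} (hα : 0 ≤ α) (ha : 0 < a) :
    ∃ d : ℕ → ℝ, ∀ r, |r| < 1 → HasSum (fun n => d n * r ^ n)
      (∫ t in (0:ℝ)..π, sin t ^ α * (1 + r ^ 2 - 2 * r * cos t) ^ (-a)) := by
  refine ⟨fun n => ∑ p ∈ Finset.HasAntidiagonal.antidiagonal n,
    (ascPochhammer ℝ p.1).eval a / p.1.factorial * ((ascPochhammer ℝ p.2).eval a / p.2.factorial) *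
      ∫ t in (0:ℝ)..π, sin t ^ α * cos ((p.1 - p.2) * t), fun r hr => ?_⟩
  have hb (n : ℕ) : 0 ≤ (ascPochhammer ℝ n).eval a / n.factorial := by
    have := ascPochhammer_pos n a ha
    positivity
  have hsum := (hasSum_one_sub_rpow_neg a |r| (by rwa [abs_abs])).summable
  have hnonneg : 0 ≤ fun n : ℕ => (ascPochhammer ℝ n).eval a / n.factorial * |r| ^ n :=
    fun n => mul_nonneg (hb n) (by positivity)
  have h := (hasSum_integral_mul_of_abs_le (a := 0) (b := π) (continuous_sin_rpow hα)
    (fun p => by fun_prop) (hsum.mul_of_nonneg hsum hnonneg hnonneg) (fun p t => ?_)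
    (hasSum_poisson_rpow_neg a hr)).sum_antidiagonal
  · have hterm (n : ℕ) : (∑ p ∈ Finset.HasAntidiagonal.antidiagonal n,
        ∫ t in (0:ℝ)..π, sin t ^ α * ((ascPochhammer ℝ p.1).eval a / p.1.factorial *
          ((ascPochhammer ℝ p.2).eval a / p.2.factorial) *
          (cos ((p.1 - p.2) * t) * r ^ (p.1 + p.2)))) =
        (∑ p ∈ Finset.HasAntidiagonal.antidiagonal n, (ascPochhammer ℝ p.1).eval a / p.1.factorial *
          ((ascPochhammer ℝ p.2).eval a / p.2.factorial) *
          ∫ t in (0:ℝ)..π, sin t ^ α * cos ((p.1 - p.2) * t)) * r ^ n := by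
      rw [Finset.sum_mul]
      refine Finset.sum_congr rfl fun p hp => ?_
      rw [Finset.HasAntidiagonal.mem_antidiagonal.mp hp, mul_right_comm,
        ← intervalIntegral.integral_const_mul]
      congr 1
      ext t
      ring
    simpa only [hterm] using h
  · rw [abs_mul, abs_of_nonneg (mul_nonneg (hb _) (hb _)), abs_mul, abs_pow, mul_mul_mul_comm _ (|r| ^ p.1),
      ← pow_add]
    exact mul_le_mul_of_nonneg_left
      (mul_le_of_le_one_left (by positivity) (Real.abs_cos_le_one _)) (mul_nonneg (hb _) (hb _))

theorem hasSum_integral_sin_rpow_mul_of_abs_lt {α a r : ℝ} (hα : 0 ≤ α) (ha : 0 < a)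
    (hr : |r| < 1 / 4) :
    HasSum (fun n : ℕ => betaFn ((α + 1) / 2) (1 / 2) * ((ascPochhammer ℝ n).eval a *
      (ascPochhammer ℝ n).eval (a - α / 2) / (ascPochhammer ℝ n).eval (1 + α / 2) /
        n.factorial) * r ^ (2 * n))
      (∫ t in (0:ℝ)..π, sin t ^ α * (1 + r ^ 2 - 2 * r * cos t) ^ (-a)) := by
  have hrsq : r ^ 2 ≤ 1 / 16 := by rw [← sq_abs]; nlinarith [abs_nonneg r]
  have hcos (t : ℝ) : |2 * r * cos t| ≤ 2 * |r| := by
    rw [abs_mul, abs_mul, abs_two]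
    exact mul_le_of_le_one_right (by positivity) (Real.abs_cos_le_one t)
  have hF (t : ℝ) := hasSum_one_sub_sub_rpow_neg (u := 2 * r * cos t) (v := -r ^ 2) ha (by
    rw [abs_neg, abs_of_nonneg (sq_nonneg r)]
    linarith [hcos t])
  simp only [show ∀ t, 1 - (2 * r * cos t + -r ^ 2) = 1 + r ^ 2 - 2 * r * cos t by
    intro t; ring] at hF
  have h := hasSum_integral_mul_of_abs_le (a := 0) (b := π) (continuous_sin_rpow hα)
    (fun p => by fun_prop) (summable_ascPochhammer_mul_pow_mul_pow (u := 2 * |r|) (v := r ^ 2) ha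
      (by positivity) (by positivity) (by linarith)) (fun p t => ?_) hF
  · have heq (p : ℕ × ℕ) : ∫ t in (0:ℝ)..π, sin t ^ α * ((ascPochhammer ℝ (p.1 + p.2)).eval a /
        (p.1.factorial * p.2.factorial) * ((2 * r * cos t) ^ p.1 * (-r ^ 2) ^ p.2)) =
        (ascPochhammer ℝ (p.1 + p.2)).eval a / (p.1.factorial * p.2.factorial) *
        ((2 * r) ^ p.1 * (-r ^ 2) ^ p.2) * ∫ t in (0:ℝ)..π, sin t ^ α * cos t ^ p.1 := by
      rw [← intervalIntegral.integral_const_mul]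
      congr 1
      ext t
      ring
    simp only [heq] at h
    have hinj : Function.Injective fun p : ℕ × ℕ => (2 * p.1, p.2) := fun p q hpq => by
      simp only [Prod.mk.injEq] at hpq
      exact Prod.ext (by omega) hpq.2
    rw [← hinj.hasSum_iff] at h
    · have h' := h.sum_antidiagonal
      have hterm (n : ℕ) : (∑ p ∈ Finset.HasAntidiagonal.antidiagonal n,
          (ascPochhammer ℝ (2 * p.1 + p.2)).eval a / ((2 * p.1).factorial * p.2.factorial) *
          ((2 * r) ^ (2 * p.1) * (-r ^ 2) ^ p.2) *
          ∫ t in (0:ℝ)..π, sin t ^ α * cos t ^ (2 * p.1)) =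
          betaFn ((α + 1) / 2) (1 / 2) * ((ascPochhammer ℝ n).eval a *
            (ascPochhammer ℝ n).eval (a - α / 2) / (ascPochhammer ℝ n).eval (1 + α / 2) /
            n.factorial) * r ^ (2 * n) := by
        have hv := sum_antidiagonal_ascPochhammer_div a (1 + α / 2) (by positivity) n
        rw [show a - (1 + α / 2) + 1 = a - α / 2 by ring] at hv
        rw [← hv, Finset.mul_sum, Finset.sum_mul]
        refine Finset.sum_congr rfl fun p hp => ?_
        have hhalf := (ascPochhammer_pos p.1 (1 / 2 : ℝ) (by norm_num)).ne'
        rw [← Finset.HasAntidiagonal.mem_antidiagonal.mp hp,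
          integral_sin_rpow_mul_cos_pow_even hα, factorial_two_mul_eq_ascPochhammer,
          show 2 * p.1 + p.2 = p.1 + p.2 + p.1 by ring, neg_pow (r ^ 2), mul_pow, pow_mul 2 2,
          mul_add, pow_add r, pow_mul r 2 p.2]
        norm_num
        field_simp
      simpa only [Function.comp_def, hterm] using h'
    · rintro ⟨i, j⟩ hij
      obtain ⟨k, rfl | rfl⟩ := Nat.even_or_odd' i
      · exact absurd ⟨(k, j), rfl⟩ hij
      · simp only [integral_sin_rpow_mul_cos_pow_odd, mul_zero]
  · have := ascPochhammer_pos (p.1 + p.2) a ha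
    rw [abs_mul, abs_of_nonneg (by positivity), abs_mul, abs_pow, abs_pow, abs_neg,
      abs_of_nonneg (sq_nonneg r)]
    have := hcos t
    gcongr

theorem hasSum_integral_sin_rpow_mul {α a r : ℝ} (hα : 0 ≤ α) (ha : 0 < a) (hr : |r| < 1) :
    HasSum (fun n : ℕ => betaFn ((α + 1) / 2) (1 / 2) * ((ascPochhammer ℝ n).eval a *
      (ascPochhammer ℝ n).eval (a - α / 2) / (ascPochhammer ℝ n).eval (1 + α / 2) /
        n.factorial) * r ^ (2 * n))
      (∫ t in (0:ℝ)..π, sin t ^ α * (1 + r ^ 2 - 2 * r * cos t) ^ (-a)) := by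
  obtain ⟨d, hd⟩ := exists_hasSum_integral_sin_rpow_mul hα ha
  have hsmall (r : ℝ) (hr : |r| < 1 / 4) := hasSum_integral_sin_rpow_mul_of_abs_lt hα ha hr
  exact hasSum_even_of_hasSum (by norm_num) (by norm_num) hd hsmall hr

theorem integral_sin_pow_div_eq_beta_mul_hyperF
    (l₁ l₂ r : ℝ) (h₁ : 1 < l₁) (h₂ : 0 < l₂) (hr : r ∈ Ico (0:ℝ) 1) :
    ∫ t in (0:ℝ)..π, (sin t) ^ (l₁ - 1) / (1 + r ^ 2 - 2 * r * cos t) ^ l₂ =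
      betaFn (l₁ / 2) (1 / 2) *
        hyperF l₂ (l₂ + (1 - l₁) / 2) ((1 + l₁) / 2) (r ^ 2) := by
  have h := (hasSum_integral_sin_rpow_mul (α := l₁ - 1) (by linarith) h₂
    (by rw [abs_of_nonneg hr.1]; exact hr.2)).tsum_eq
  rw [show l₁ - 1 + 1 = l₁ by ring, show l₂ - (l₁ - 1) / 2 = l₂ + (1 - l₁) / 2 by ring,
    show 1 + (l₁ - 1) / 2 = (1 + l₁) / 2 by ring] at h
  have hint : ∫ t in (0:ℝ)..π, (sin t) ^ (l₁ - 1) / (1 + r ^ 2 - 2 * r * cos t) ^ l₂ =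
      ∫ t in (0:ℝ)..π, (sin t) ^ (l₁ - 1) * (1 + r ^ 2 - 2 * r * cos t) ^ (-l₂) := by
    congr 1
    ext t
    have : 0 ≤ 1 + r ^ 2 - 2 * r * cos t := by
      nlinarith [Real.sin_sq_add_cos_sq t, sq_nonneg (r - cos t), sq_nonneg (sin t)]
    rw [Real.rpow_neg this, div_eq_mul_inv]
  rw [hint, ← h, hyperF, ← tsum_mul_left]
  congr 1
  ext n
  rw [pow_mul]
  ring
end

section
/- For n ≥ 3, r ∈ [0,1), and x ∈ B^n, the normalized surface integral ∫_{S^{n−1}} |rx − ζ|^{−(n+2)} dσ(ζ) equals F((n+2)/2, 2; n/2; r²|x|²), where σ is the normalized Lebesgue surface measure on the unit sphere S^{n−1} and F is the Gauss hypergeometric function. -/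
open Real Set Metric MeasureTheory

/-- The normalized (total mass one) surface measure on the unit sphere of `ℝⁿ`. -/
noncomputable def sphereMeasureNormalized (n : ℕ) :
    Measure (sphere (0 : EuclideanSpace ℝ (Fin n)) 1) :=
  ((volume : Measure (EuclideanSpace ℝ (Fin n))).toSphere Set.univ)⁻¹ •
    (volume : Measure (EuclideanSpace ℝ (Fin n))).toSphere

/-- Differentiation under the integral sign over a compact space. -/
lemma hasDerivAt_integral_of_compactSpace {K : Type*} [TopologicalSpace K] [CompactSpace K]
    [MeasurableSpace K] [BorelSpace K] {μ : Measure K} [IsFiniteMeasure μ] {F F' : ℝ → K → ℝ}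
    {U : Set ℝ} (hU : IsOpen U) (hF : ∀ t ∈ U, Continuous (F t))
    (hF' : ContinuousOn (Function.uncurry F') (U ×ˢ univ))
    (hd : ∀ t ∈ U, ∀ k, HasDerivAt (F · k) (F' t k) t) {t₀ : ℝ} (ht₀ : t₀ ∈ U) :
    HasDerivAt (fun t ↦ ∫ k, F t k ∂μ) (∫ k, F' t₀ k ∂μ) t₀ := by
  obtain ⟨ε, hε, hεU⟩ := Metric.nhds_basis_closedBall.mem_iff.1 (hU.mem_nhds ht₀)
  obtain ⟨C, hC⟩ := ((isCompact_closedBall t₀ ε).prod isCompact_univ).exists_bound_of_continuousOn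
    (hF'.mono (prod_mono_left hεU))
  have hc : Continuous (F' t₀) := continuousOn_univ.1 <|
    hF'.comp (f := fun k ↦ (t₀, k)) (by fun_prop) fun k _ ↦ ⟨ht₀, mem_univ k⟩
  refine (hasDerivAt_integral_of_dominated_loc_of_deriv_le (bound := fun _ ↦ C)
    (closedBall_mem_nhds t₀ hε) ?_ ?_ hc.aestronglyMeasurable ?_ (integrable_const C) ?_).2
  · filter_upwards [hU.mem_nhds ht₀] with t ht using (hF t ht).aestronglyMeasurable
  · exact (hF t₀ ht₀).integrable_of_hasCompactSupport (HasCompactSupport.of_compactSpace _)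
  · exact .of_forall fun k t ht ↦ hC (t, k) ⟨ht, mem_univ k⟩
  · exact .of_forall fun k t ht ↦ hd t (hεU ht) k

/-- A linear isometry maps the unit sphere onto itself. -/
noncomputable def sphereHomeomorph {E : Type*} [NormedAddCommGroup E] [NormedSpace ℝ E]
    (e : E ≃ₗᵢ[ℝ] E) : sphere (0 : E) 1 ≃ₜ sphere (0 : E) 1 :=
  e.toHomeomorph.subtype fun x ↦ by simp

open scoped Pointwise in
lemma measurePreserving_sphereHomeomorph {n : ℕ}
    (e : EuclideanSpace ℝ (Fin n) ≃ₗᵢ[ℝ] EuclideanSpace ℝ (Fin n)) :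
    MeasurePreserving (sphereHomeomorph e) (sphereMeasureNormalized n)
      (sphereMeasureNormalized n) := by
  refine MeasurePreserving.smul_measure ⟨(sphereHomeomorph e).measurable, ?_⟩ _
  ext s hs
  have hs' := (sphereHomeomorph e).measurable hs
  rw [Measure.map_apply (sphereHomeomorph e).measurable hs, Measure.toSphere_apply' _ hs',
    Measure.toSphere_apply' _ hs, ← e.measurePreserving.measure_preimage_emb
      e.toHomeomorph.measurableEmbedding (Ioo (0 : ℝ) 1 • Set.image Subtype.val s)]
  congr 2
  ext z
  simp only [mem_preimage, Set.mem_smul, mem_image]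
  constructor
  · rintro ⟨c, hc, _, ⟨w, hw, rfl⟩, rfl⟩
    exact ⟨c, hc, _, ⟨_, hw, rfl⟩, (e.map_smul c w).symm⟩
  · rintro ⟨c, hc, _, ⟨w, hw, rfl⟩, h⟩
    refine ⟨c, hc, _, ⟨(sphereHomeomorph e).symm w, by simpa using hw, rfl⟩, e.injective ?_⟩
    rw [← h, e.map_smul]
    congr 1
    exact congrArg Subtype.val ((sphereHomeomorph e).apply_symm_apply w)

lemma isProbabilityMeasure_sphereMeasureNormalized {n : ℕ} (hn : n ≠ 0) :
    IsProbabilityMeasure (sphereMeasureNormalized n) := by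
  have : NeZero n := ⟨hn⟩
  refine ⟨?_⟩
  rw [sphereMeasureNormalized, Measure.smul_apply, smul_eq_mul]
  exact ENNReal.inv_mul_cancel (Measure.measure_univ_ne_zero.2 (Measure.toSphere_ne_zero _))
    (measure_ne_top _ _)

instance (n : ℕ) : IsFiniteMeasure (sphereMeasureNormalized n) := by
  rcases eq_or_ne n 0 with rfl | hn
  · have : IsEmpty (sphere (0 : EuclideanSpace ℝ (Fin 0)) 1) :=
      ⟨fun ζ ↦ by simpa [Subsingleton.elim (ζ : EuclideanSpace ℝ (Fin 0)) 0] using ζ.2⟩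
    exact ⟨by simp [univ_eq_empty_iff.2 this]⟩
  · have := isProbabilityMeasure_sphereMeasureNormalized hn
    infer_instance

/-- The derivative of a function along a rotation field integrates to zero over the sphere. -/
lemma integral_sphere_fderiv_skewAdjoint {n : ℕ}
    {L : EuclideanSpace ℝ (Fin n) →L[ℝ] EuclideanSpace ℝ (Fin n)} (hL : L ∈ skewAdjoint _)
    {f : EuclideanSpace ℝ (Fin n) → ℝ}
    {f' : EuclideanSpace ℝ (Fin n) → EuclideanSpace ℝ (Fin n) →L[ℝ] ℝ}
    (hf : ∀ z ∈ sphere 0 1, HasFDerivAt f (f' z) z) (hf' : ContinuousOn f' (sphere 0 1)) :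
    ∫ ζ : sphere (0 : EuclideanSpace ℝ (Fin n)) 1, f' ζ (L ζ) ∂(sphereMeasureNormalized n) = 0 := by
  have hu : ∀ t : ℝ, NormedSpace.exp (t • L) ∈ unitary _ := fun t ↦
    let : NormedAlgebra ℚ (EuclideanSpace ℝ (Fin n) →L[ℝ] EuclideanSpace ℝ (Fin n)) :=
      .restrictScalars ℚ ℝ _
    NormedSpace.exp_mem_unitary_of_mem_skewAdjoint (skewAdjoint.smul_mem t hL)
  let e := fun t : ℝ ↦ Unitary.linearIsometryEquiv ⟨_, hu t⟩
  have hmem : ∀ (t : ℝ) (ζ : sphere (0 : EuclideanSpace ℝ (Fin n)) 1),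
      NormedSpace.exp (t • L) (ζ : EuclideanSpace ℝ (Fin n)) ∈ sphere 0 1 :=
    fun t ζ ↦ (sphereHomeomorph (e t) ζ).2
  have hcont : Continuous fun q : ℝ × sphere (0 : EuclideanSpace ℝ (Fin n)) 1 ↦
      NormedSpace.exp (q.1 • L) (q.2 : EuclideanSpace ℝ (Fin n)) := by
    exact ((differentiable_exp_smul_const ℝ L).continuous.comp continuous_fst).clm_apply
      (continuous_subtype_val.comp continuous_snd)
  have key := hasDerivAt_integral_of_compactSpace (μ := sphereMeasureNormalized n) (t₀ := 0)
    (F := fun t ζ ↦ f (NormedSpace.exp (t • L) ζ))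
    (F' := fun t ζ ↦ f' (NormedSpace.exp (t • L) ζ) (L (NormedSpace.exp (t • L) ζ)))
    isOpen_univ ?_ ?_ ?_ (mem_univ _)
  · have hconst : (fun t : ℝ ↦ ∫ ζ : sphere (0 : EuclideanSpace ℝ (Fin n)) 1,
        f (NormedSpace.exp (t • L) ζ) ∂(sphereMeasureNormalized n)) =
        fun _ ↦ ∫ ζ : sphere (0 : EuclideanSpace ℝ (Fin n)) 1, f ζ ∂(sphereMeasureNormalized n) :=
      funext fun t ↦ (measurePreserving_sphereHomeomorph (e t)).integral_comp
        (sphereHomeomorph (e t)).measurableEmbedding fun ζ ↦ f ζ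
    rw [hconst] at key
    refine (integral_congr_ae (.of_forall fun ζ ↦ ?_)).trans (key.unique (hasDerivAt_const _ _))
    have h0 : NormedSpace.exp ((0 : ℝ) • L) = 1 :=
      (congrArg NormedSpace.exp (zero_smul ℝ L)).trans NormedSpace.exp_zero
    simp only [h0]
    rfl
  · intro t _
    exact continuous_iff_continuousAt.2 fun ζ ↦
      ContinuousAt.comp (f := fun ζ : sphere (0 : EuclideanSpace ℝ (Fin n)) 1 ↦
        NormedSpace.exp (t • L) (ζ : EuclideanSpace ℝ (Fin n)))
        (hf _ (hmem t ζ)).continuousAt (by fun_prop)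
  · have h1 := hf'.comp_continuous hcont fun q ↦ hmem q.1 q.2
    exact (h1.clm_apply (L.continuous.comp hcont)).continuousOn
  · intro t _ ζ
    exact (hf _ (hmem t ζ)).comp_hasDerivAt t
      ((hasDerivAt_exp_smul_const' (𝕂 := ℝ) L t).clm_apply (hasDerivAt_const t _)|>.congr_deriv
        (by simp))

/-- Integration by parts on the sphere for functions of one linear coordinate. -/
lemma integral_sphere_inner_mul {n : ℕ} (a : EuclideanSpace ℝ (Fin n)) {p p' : ℝ → ℝ}
    (hp : ∀ u ∈ Icc (-‖a‖) ‖a‖, HasDerivAt p (p' u) u)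
    (hp' : ContinuousOn p' (Icc (-‖a‖) ‖a‖)) :
    ∫ ζ : sphere (0 : EuclideanSpace ℝ (Fin n)) 1,
      (((n : ℝ) - 1) * (inner ℝ a ζ * p (inner ℝ a ζ)) -
        (‖a‖ ^ 2 - inner ℝ a ζ ^ 2) * p' (inner ℝ a ζ)) ∂(sphereMeasureNormalized n) = 0 := by
  let L := fun b : EuclideanSpace ℝ (Fin n) ↦
    (innerSL ℝ a).smulRight b - (innerSL ℝ b).smulRight a
  let f' := fun b z : EuclideanSpace ℝ (Fin n) ↦
    inner ℝ b z • (p' (inner ℝ a z) • innerSL ℝ a) + p (inner ℝ a z) • innerSL ℝ b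
  have hmem : ∀ z ∈ sphere (0 : EuclideanSpace ℝ (Fin n)) 1, inner ℝ a z ∈ Icc (-‖a‖) ‖a‖ := by
    intro z hz
    rw [mem_Icc, ← abs_le]
    simpa [mem_sphere_zero_iff_norm.1 hz] using abs_real_inner_le_norm a z
  have hL : ∀ b, L b ∈ skewAdjoint _ := by
    intro b
    rw [skewAdjoint.mem_iff, ContinuousLinearMap.star_eq_adjoint]
    ext1 v
    refine ext_inner_right ℝ fun w ↦ ?_
    rw [ContinuousLinearMap.adjoint_inner_left]
    simp only [L, sub_apply, neg_apply,
      ContinuousLinearMap.smulRight_apply, innerSL_apply_apply, inner_sub_left, inner_sub_right,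
      inner_neg_left, real_inner_smul_left, real_inner_smul_right,
      real_inner_comm v a, real_inner_comm v b]
    ring
  have hf : ∀ b, ∀ z ∈ sphere (0 : EuclideanSpace ℝ (Fin n)) 1,
      HasFDerivAt (fun z ↦ inner ℝ b z * p (inner ℝ a z)) (f' b z) z := fun b z hz ↦
    (innerSL ℝ b).hasFDerivAt.mul ((hp _ (hmem z hz)).comp_hasFDerivAt z
      (innerSL ℝ a).hasFDerivAt)
  have hpc : ContinuousOn p (Icc (-‖a‖) ‖a‖) := HasDerivAt.continuousOn hp
  have hf' : ∀ b, ContinuousOn (f' b) (sphere 0 1) := by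
    intro b
    have ha : ContinuousOn (fun z ↦ inner ℝ a z) (sphere (0 : EuclideanSpace ℝ (Fin n)) 1) := by
      fun_prop
    have h1 : ContinuousOn (fun z ↦ p' (inner ℝ a z))
      (sphere (0 : EuclideanSpace ℝ (Fin n)) 1) := hp'.comp ha hmem
    have h2 : ContinuousOn (fun z ↦ p (inner ℝ a z))
      (sphere (0 : EuclideanSpace ℝ (Fin n)) 1) := hpc.comp ha hmem
    exact ((by fun_prop : ContinuousOn (fun z ↦ inner ℝ b z) _).smul
      (h1.smul (continuousOn_const (c := innerSL ℝ a)))).add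
      (h2.smul (continuousOn_const (c := innerSL ℝ b)))
  let b := EuclideanSpace.basisFun (Fin n) ℝ
  have hsum : ∀ ζ : sphere (0 : EuclideanSpace ℝ (Fin n)) 1,
      ((n : ℝ) - 1) * (inner ℝ a ζ * p (inner ℝ a ζ)) -
        (‖a‖ ^ 2 - inner ℝ a ζ ^ 2) * p' (inner ℝ a ζ) = ∑ i, f' (b i) ζ (L (b i) ζ) := by
    intro ζ
    have hterm : ∀ i, f' (b i) ζ (L (b i) ζ) =
        p (inner ℝ a ζ) * inner ℝ a ζ
          + (p' (inner ℝ a ζ) * inner ℝ a ζ - p (inner ℝ a ζ)) * (inner ℝ a (b i) * inner ℝ (b i) ζ)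
          - p' (inner ℝ a ζ) * ‖a‖ ^ 2 * (inner ℝ (ζ : EuclideanSpace ℝ (Fin n)) (b i)
            * inner ℝ (b i) ζ) := by
      intro i
      have hb : inner ℝ (b i) (b i) = 1 := by
        rw [real_inner_self_eq_norm_sq, b.orthonormal.1 i, one_pow]
      simp only [f', L, add_apply, sub_apply,
        smul_apply, ContinuousLinearMap.smulRight_apply, innerSL_apply_apply,
        inner_sub_right, real_inner_smul_right, smul_eq_mul, real_inner_self_eq_norm_sq a, hb,
        real_inner_comm (b i) a, real_inner_comm (b i) (ζ : EuclideanSpace ℝ (Fin n))]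
      ring
    have hζ : inner ℝ (ζ : EuclideanSpace ℝ (Fin n)) ζ = (1 : ℝ) := by
      rw [real_inner_self_eq_norm_sq, mem_sphere_zero_iff_norm.1 ζ.2, one_pow]
    simp only [hterm, Finset.sum_sub_distrib, Finset.sum_add_distrib, ← Finset.mul_sum,
      b.sum_inner_mul_inner, hζ, Finset.sum_const, Finset.card_univ, Fintype.card_fin, nsmul_eq_mul]
    ring
  simp only [hsum]
  rw [integral_finsetSum]
  · exact Finset.sum_eq_zero fun i _ ↦
      integral_sphere_fderiv_skewAdjoint (hL (b i)) (hf (b i)) (hf' (b i))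
  · intro i _
    have : Continuous fun ζ : sphere (0 : EuclideanSpace ℝ (Fin n)) 1 ↦ f' (b i) ζ (L (b i) ζ) :=
      ((hf' (b i)).comp_continuous continuous_subtype_val fun ζ ↦ ζ.2).clm_apply (by fun_prop)
    exact this.integrable_of_hasCompactSupport (HasCompactSupport.of_compactSpace _)

/-- The spherical mean of `ζ ↦ ‖t • x - ζ‖ ^ (-2 s)`. -/
noncomputable def distPowMean {n : ℕ} (x : EuclideanSpace ℝ (Fin n)) (s t : ℝ) : ℝ :=
  ∫ ζ : sphere (0 : EuclideanSpace ℝ (Fin n)) 1,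
    (‖t • x - (ζ : EuclideanSpace ℝ (Fin n))‖ ^ 2) ^ (-s) ∂(sphereMeasureNormalized n)

lemma norm_smul_sub_sphere_sq {n : ℕ} (x : EuclideanSpace ℝ (Fin n)) (t : ℝ)
    (ζ : sphere (0 : EuclideanSpace ℝ (Fin n)) 1) :
    ‖t • x - (ζ : EuclideanSpace ℝ (Fin n))‖ ^ 2 =
      1 + t ^ 2 * ‖x‖ ^ 2 - 2 * (t * inner ℝ x (ζ : EuclideanSpace ℝ (Fin n))) := by
  rw [norm_sub_sq_real, mem_sphere_zero_iff_norm.1 ζ.2, norm_smul, real_inner_smul_left, mul_pow,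
    norm_eq_abs, sq_abs]
  ring

lemma norm_smul_lt_one {E : Type*} [NormedAddCommGroup E] [NormedSpace ℝ E] {x : E}
    (hx : ‖x‖ < 1) {t : ℝ} (ht : t ∈ Ioo (-1 : ℝ) 1) : ‖t • x‖ < 1 := by
  rw [norm_smul, norm_eq_abs]
  exact mul_lt_one_of_nonneg_of_lt_one_left (abs_nonneg t) (abs_lt.2 ht) hx.le

lemma norm_sub_sphere_sq_pos {E : Type*} [NormedAddCommGroup E] {y : E} (hy : ‖y‖ < 1)
    (ζ : sphere (0 : E) 1) : 0 < ‖y - ζ‖ ^ 2 := by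
  have : y - ζ ≠ 0 := fun h ↦ by
    rw [sub_eq_zero.1 h, mem_sphere_zero_iff_norm.1 ζ.2] at hy
    exact lt_irrefl _ hy
  positivity

lemma continuous_norm_sub_sphere_rpow {E : Type*} [NormedAddCommGroup E] {y : E} (hy : ‖y‖ < 1)
    (s : ℝ) : Continuous fun ζ : sphere (0 : E) 1 ↦ (‖y - ζ‖ ^ 2) ^ s :=
  Continuous.rpow_const (by fun_prop) fun ζ ↦ .inl (norm_sub_sphere_sq_pos hy ζ).ne'

lemma integrable_norm_sub_sphere_rpow {n : ℕ} {y : EuclideanSpace ℝ (Fin n)} (hy : ‖y‖ < 1)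
    (s : ℝ) : Integrable (fun ζ : sphere (0 : EuclideanSpace ℝ (Fin n)) 1 ↦
      (‖y - (ζ : EuclideanSpace ℝ (Fin n))‖ ^ 2) ^ s) (sphereMeasureNormalized n) :=
  (continuous_norm_sub_sphere_rpow hy s).integrable_of_hasCompactSupport
    (HasCompactSupport.of_compactSpace _)

lemma distPowMean_zero_right {n : ℕ} (hn : n ≠ 0) (x : EuclideanSpace ℝ (Fin n)) (s : ℝ) :
    distPowMean x s 0 = 1 := by
  have := isProbabilityMeasure_sphereMeasureNormalized hn
  simp [distPowMean]

lemma rpow_neg_eq_mul_rpow_neg_add_one {D : ℝ} (hD : 0 < D) (s : ℝ) :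
    D ^ (-s) = D * D ^ (-(s + 1)) := by
  rw [neg_add, ← sub_eq_add_neg, rpow_sub_one hD.ne']
  field_simp

/-- The three-term recurrence in the exponent. -/
lemma distPowMean_recurrence {n : ℕ} {x : EuclideanSpace ℝ (Fin n)} (hx : ‖x‖ < 1) (s : ℝ)
    {t : ℝ} (ht : t ∈ Ioo (-1 : ℝ) 1) :
    s * (1 - t ^ 2 * ‖x‖ ^ 2) ^ 2 * distPowMean x (s + 1) t =
      (2 * s - n + 1) * (1 + t ^ 2 * ‖x‖ ^ 2) * distPowMean x s t +
        (n - 1 - s) * distPowMean x (s - 1) t := by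
  have hy := norm_smul_lt_one hx ht
  have hq : ‖t • x‖ ^ 2 = t ^ 2 * ‖x‖ ^ 2 := by rw [norm_smul, mul_pow, norm_eq_abs, sq_abs]
  set q := t ^ 2 * ‖x‖ ^ 2 with hqdef
  have hpos : ∀ u ∈ Icc (-‖t • x‖) ‖t • x‖, 0 < 1 + q - 2 * u := by
    intro u hu
    nlinarith [hu.2, sq_pos_of_pos (sub_pos.2 hy)]
  have key := integral_sphere_inner_mul (t • x) (p := fun u ↦ (1 + q - 2 * u) ^ (-s))
    (p' := fun u ↦ 2 * s * (1 + q - 2 * u) ^ (-(s + 1))) ?_ ?_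
  · have hpt : ∀ ζ : sphere (0 : EuclideanSpace ℝ (Fin n)) 1,
        ((n : ℝ) - 1) * (inner ℝ (t • x) (ζ : EuclideanSpace ℝ (Fin n)) *
            (1 + q - 2 * inner ℝ (t • x) (ζ : EuclideanSpace ℝ (Fin n))) ^ (-s)) -
          (‖t • x‖ ^ 2 - inner ℝ (t • x) (ζ : EuclideanSpace ℝ (Fin n)) ^ 2) *
            (2 * s * (1 + q - 2 * inner ℝ (t • x) (ζ : EuclideanSpace ℝ (Fin n))) ^ (-(s + 1))) =
        s * (1 - q) ^ 2 / 2 * (‖t • x - (ζ : EuclideanSpace ℝ (Fin n))‖ ^ 2) ^ (-(s + 1)) -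
        (2 * s - n + 1) * (1 + q) / 2 * (‖t • x - (ζ : EuclideanSpace ℝ (Fin n))‖ ^ 2) ^ (-s) -
        (n - 1 - s) / 2 * (‖t • x - (ζ : EuclideanSpace ℝ (Fin n))‖ ^ 2) ^ (-(s - 1)) := by
      intro ζ
      have hD := norm_sub_sphere_sq_pos hy ζ
      have hDu := norm_smul_sub_sphere_sq x t ζ
      rw [← real_inner_smul_left, ← hqdef] at hDu
      rw [hq, ← hDu]
      set D := ‖t • x - (ζ : EuclideanSpace ℝ (Fin n))‖ ^ 2
      have hu : inner ℝ (t • x) (ζ : EuclideanSpace ℝ (Fin n)) = (1 + q - D) / 2 := by linarith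
      have h0 : D ^ (-s) = D * D ^ (-(s + 1)) := rpow_neg_eq_mul_rpow_neg_add_one hD s
      have h1 : D ^ (-(s - 1)) = D * D ^ (-s) := by
        simpa using rpow_neg_eq_mul_rpow_neg_add_one hD (s - 1)
      rw [hu, h1, h0]
      ring
    simp only [hpt] at key
    have hi := integrable_norm_sub_sphere_rpow hy
    rw [integral_sub (by exact ((hi _).const_mul _).sub ((hi _).const_mul _)) ((hi _).const_mul _),
      integral_sub ((hi _).const_mul _) ((hi _).const_mul _), integral_const_mul,
      integral_const_mul, integral_const_mul] at key
    simp only [distPowMean]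
    linarith
  · intro u hu
    have := (((hasDerivAt_id u).const_mul 2).const_sub (1 + q)).rpow_const (p := -s)
      (.inl (hpos u hu).ne')
    refine this.congr_deriv ?_
    simp only [id]
    ring_nf
  · exact continuousOn_const.mul (ContinuousOn.rpow_const (by fun_prop) fun u hu ↦
      .inl (hpos u hu).ne')

/-- The derivative in the radial parameter. -/
lemma exists_hasDerivAt_distPowMean {n : ℕ} {x : EuclideanSpace ℝ (Fin n)} (hx : ‖x‖ < 1) (s : ℝ)
    {t : ℝ} (ht : t ∈ Ioo (-1 : ℝ) 1) :
    ∃ A' : ℝ, HasDerivAt (distPowMean x s) A' t ∧ t * A' =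
      s * ((1 - t ^ 2 * ‖x‖ ^ 2) * distPowMean x (s + 1) t - distPowMean x s t) := by
  have hD : ∀ t ∈ Ioo (-1 : ℝ) 1, ∀ ζ : sphere (0 : EuclideanSpace ℝ (Fin n)) 1,
      0 < ‖t • x - (ζ : EuclideanSpace ℝ (Fin n))‖ ^ 2 := fun t ht ζ ↦
    norm_sub_sphere_sq_pos (norm_smul_lt_one hx ht) ζ
  refine ⟨_, hasDerivAt_integral_of_compactSpace isOpen_Ioo
    (F := fun t (ζ : sphere (0 : EuclideanSpace ℝ (Fin n)) 1) ↦
      (‖t • x - (ζ : EuclideanSpace ℝ (Fin n))‖ ^ 2) ^ (-s))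
    (F' := fun t (ζ : sphere (0 : EuclideanSpace ℝ (Fin n)) 1) ↦
      (2 * t * ‖x‖ ^ 2 - 2 * inner ℝ x (ζ : EuclideanSpace ℝ (Fin n))) * -s *
      (‖t • x - (ζ : EuclideanSpace ℝ (Fin n))‖ ^ 2) ^ (-s - 1))
    (fun t ht ↦ continuous_norm_sub_sphere_rpow (norm_smul_lt_one hx ht) _) ?_ ?_ ht, ?_⟩
  · refine ContinuousOn.mul (by fun_prop) (ContinuousOn.rpow_const (by fun_prop) ?_)
    rintro ⟨t, ζ⟩ ⟨ht, -⟩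
    exact .inl (hD t ht ζ).ne'
  · intro t ht ζ
    refine HasDerivAt.rpow_const (p := -s) ?_ (.inl (hD t ht ζ).ne')
    simp only [norm_smul_sub_sphere_sq]
    have h1 := ((hasDerivAt_pow 2 t).mul_const (‖x‖ ^ 2)).const_add 1
    have h2 := ((hasDerivAt_id t).mul_const
      (inner ℝ x (ζ : EuclideanSpace ℝ (Fin n)))).const_mul 2
    exact (h1.sub h2).congr_deriv (by simp)
  · have hi := integrable_norm_sub_sphere_rpow (norm_smul_lt_one hx ht)
    rw [distPowMean, distPowMean, ← integral_const_mul, ← integral_const_mul,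
      ← integral_sub ((hi _).const_mul _) (hi _), ← integral_const_mul]
    refine integral_congr_ae (.of_forall fun ζ ↦ ?_)
    have hDu := norm_smul_sub_sphere_sq x t ζ
    have hD := hD t ht ζ
    simp only
    set D := ‖t • x - (ζ : EuclideanSpace ℝ (Fin n))‖ ^ 2
    have h0 : D ^ (-s) = D * D ^ (-(s + 1)) := rpow_neg_eq_mul_rpow_neg_add_one hD s
    rw [h0, show -s - 1 = -(s + 1) by ring]
    linear_combination s * D ^ (-(s + 1)) * hDu

/-- The Newton potential of the sphere is constant in the ball, and the Poisson kernel has mean one. -/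
lemma distPowMean_newton {n : ℕ} (hn : 3 ≤ n) {x : EuclideanSpace ℝ (Fin n)} (hx : ‖x‖ < 1)
    {r : ℝ} (hr : r ∈ Ico (0 : ℝ) 1) :
    distPowMean x ((n : ℝ) / 2 - 1) r = 1 ∧
      (1 - r ^ 2 * ‖x‖ ^ 2) * distPowMean x ((n : ℝ) / 2) r = 1 := by
  obtain ⟨m, rfl⟩ := Nat.exists_eq_add_of_le' hn
  set s : ℝ := ((m + 3 : ℕ) : ℝ) / 2 with hs
  have hsm : 2 * s = m + 3 := by rw [hs]; push_cast; ring
  have hX := fun t (ht : t ∈ Ioo (-1 : ℝ) 1) ↦ exists_hasDerivAt_distPowMean hx (s - 1) ht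
  have hY := fun t (ht : t ∈ Ioo (-1 : ℝ) 1) ↦ exists_hasDerivAt_distPowMean hx s ht
  choose! X' hX' hX'eq using hX
  choose! Y' hY' hY'eq using hY
  simp only [sub_add_cancel] at hX'eq
  have const_of_deriv : ∀ (f : ℝ → ℝ) (f' : ℝ → ℝ), (∀ t ∈ Ioo (-1 : ℝ) 1, HasDerivAt f (f' t) t) →
      (∀ t ∈ Ioo (0 : ℝ) 1, f' t = 0) → ∀ t ∈ Ico (0 : ℝ) 1, f t = f 0 := by
    intro f f' hf hf' t ht
    rcases ht.1.eq_or_lt with rfl | h0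
    · rfl
    obtain ⟨c, hc, hslope⟩ := exists_hasDerivAt_eq_slope f f' h0
      (HasDerivAt.continuousOn fun u hu ↦ hf u ⟨by linarith [hu.1], hu.2.trans_lt ht.2⟩)
      fun u hu ↦ hf u ⟨by linarith [hu.1], hu.2.trans ht.2⟩
    rw [hf' c ⟨hc.1, hc.2.trans ht.2⟩, eq_comm, div_eq_zero_iff] at hslope
    rcases hslope with h | h <;> linarith
  have hXZ : ∀ t ∈ Ioo (0 : ℝ) 1, distPowMean x (s - 1) t =
      (1 - t ^ 2 * ‖x‖ ^ 2) * distPowMean x s t := by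
    intro t ht
    have hW := const_of_deriv
      (fun t ↦ t ^ (m + 1) *
        (distPowMean x (s - 1) t - (1 - t ^ 2 * ‖x‖ ^ 2) * distPowMean x s t))
      (fun t ↦ (m + 1 : ℕ) * t ^ m *
          (distPowMean x (s - 1) t - (1 - t ^ 2 * ‖x‖ ^ 2) * distPowMean x s t) +
        t ^ (m + 1) * (X' t - (-(2 * t * ‖x‖ ^ 2) * distPowMean x s t +
          (1 - t ^ 2 * ‖x‖ ^ 2) * Y' t))) ?_ ?_ t ⟨ht.1.le, ht.2⟩
    · have : t ^ (m + 1) ≠ 0 := pow_ne_zero _ ht.1.ne'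
      simp only [ne_eq, Nat.succ_ne_zero, not_false_eq_true, zero_pow, zero_mul, mul_eq_zero, this,
        false_or] at hW
      exact sub_eq_zero.1 hW
    · intro t ht
      have hq : HasDerivAt (fun t ↦ 1 - t ^ 2 * ‖x‖ ^ 2) (-(2 * t * ‖x‖ ^ 2)) t :=
        (((hasDerivAt_pow 2 t).mul_const (‖x‖ ^ 2)).const_sub 1).congr_deriv (by simp)
      exact (hasDerivAt_pow (m + 1) t).mul ((hX' t ht).sub (hq.mul (hY' t ht)))
    · intro t ht
      have ht' : t ∈ Ioo (-1 : ℝ) 1 := ⟨by linarith [ht.1], ht.2⟩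
      have hq : 1 - t ^ 2 * ‖x‖ ^ 2 ≠ 0 := by
        have h := norm_smul_lt_one hx ht'
        have : ‖t • x‖ ^ 2 = t ^ 2 * ‖x‖ ^ 2 := by rw [norm_smul, mul_pow, norm_eq_abs, sq_abs]
        nlinarith [norm_nonneg (t • x)]
      have h1 := hX'eq t ht'
      have h2 := hY'eq t ht'
      have h3 := distPowMean_recurrence hx s ht'
      push_cast at h3 ⊢
      have hm : (m : ℝ) = 2 * s - 3 := by linarith
      rw [hm] at h3 ⊢
      rw [pow_succ]
      linear_combination t ^ m * h1 - t ^ m * (1 - t ^ 2 * ‖x‖ ^ 2) * h2 - t ^ m * h3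
  have hX1 : ∀ t ∈ Ico (0 : ℝ) 1, distPowMean x (s - 1) t = 1 := by
    intro t ht
    refine (const_of_deriv _ X' hX' (fun u hu ↦ ?_) t ht).trans
      (distPowMean_zero_right (Nat.succ_ne_zero _) x (s - 1))
    have h := hX'eq u ⟨by linarith [hu.1], hu.2⟩
    rw [hXZ u hu, sub_self, mul_zero] at h
    exact (mul_eq_zero.1 h).resolve_left hu.1.ne'
  refine ⟨hX1 r hr, ?_⟩
  rcases hr.1.eq_or_lt with rfl | h0
  · simp [distPowMean_zero_right]
  · rw [← hXZ r ⟨h0, hr.2⟩, hX1 r hr]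

/-- Closed form of `F(c + 1, 2; c; t)`. -/
lemma hyperF_add_one_two {c t : ℝ} (hc : 0 < c) (ht : |t| < 1) :
    hyperF (c + 1) 2 c t = (1 - t + 2 * t / c) / (1 - t) ^ 3 := by
  have hterm : ∀ k : ℕ, ((ascPochhammer ℝ k).eval (c + 1) * (ascPochhammer ℝ k).eval 2 /
      (ascPochhammer ℝ k).eval c) * t ^ k / (Nat.factorial k) =
      (1 - 2 / c) * (((k + 1).choose 1 : ℕ) * t ^ k) + 2 / c * (((k + 2).choose 2 : ℕ) * t ^ k) := by
    intro k
    have h2 : (ascPochhammer ℝ k).eval 2 = (k + 1) * (Nat.factorial k : ℝ) := by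
      induction k with
      | zero => simp
      | succ k ih =>
        rw [ascPochhammer_succ_eval, ih, Nat.factorial_succ]
        push_cast
        ring
    have hpos := ascPochhammer_pos k c hc
    have h1 : c * (ascPochhammer ℝ k).eval (c + 1) = (ascPochhammer ℝ k).eval c * (c + k) := by
      rw [← ascPochhammer_succ_eval, ascPochhammer_succ_left]
      simp
    have hf : (Nat.factorial k : ℝ) ≠ 0 := by positivity
    have h1' : (ascPochhammer ℝ k).eval (c + 1) = (ascPochhammer ℝ k).eval c * (c + k) / c := by
      rw [← h1]; field_simp
    rw [h1', h2, Nat.choose_one_right, Nat.cast_choose_two]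
    push_cast
    field_simp
    ring
  have ht' : ‖t‖ < 1 := ht
  have h1 := (hasSum_choose_mul_geometric_of_norm_lt_one 1 ht').mul_left (1 - 2 / c)
  have h2 := (hasSum_choose_mul_geometric_of_norm_lt_one 2 ht').mul_left (2 / c)
  have h3 : 1 - t ≠ 0 := by linarith [(abs_lt.1 ht).2]
  rw [hyperF, tsum_congr hterm, (h1.add h2).tsum_eq]
  field_simp
  ring

theorem integral_sphere_inv_norm_pow (n : ℕ) (hn : 3 ≤ n) (r : ℝ)
    (hr : r ∈ Ico (0:ℝ) 1) (x : EuclideanSpace ℝ (Fin n)) (hx : ‖x‖ < 1) :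
    ∫ ζ : sphere (0 : EuclideanSpace ℝ (Fin n)) 1,
        ‖r • x - (ζ : EuclideanSpace ℝ (Fin n))‖ ^ (-((n : ℝ) + 2))
        ∂(sphereMeasureNormalized n) =
      hyperF (((n : ℝ) + 2) / 2) 2 ((n : ℝ) / 2) (r ^ 2 * ‖x‖ ^ 2) := by
  have hr' : r ∈ Ioo (-1 : ℝ) 1 := ⟨by linarith [hr.1], hr.2⟩
  have hn0 : (0 : ℝ) < n := by exact_mod_cast (by omega : 0 < n)
  have hq1 : r ^ 2 * ‖x‖ ^ 2 < 1 := by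
    have h := norm_smul_lt_one hx hr'
    have : ‖r • x‖ ^ 2 = r ^ 2 * ‖x‖ ^ 2 := by rw [norm_smul, mul_pow, norm_eq_abs, sq_abs]
    nlinarith [norm_nonneg (r • x)]
  have hmean : ∫ ζ : sphere (0 : EuclideanSpace ℝ (Fin n)) 1,
      ‖r • x - (ζ : EuclideanSpace ℝ (Fin n))‖ ^ (-((n : ℝ) + 2)) ∂(sphereMeasureNormalized n) =
      distPowMean x ((n : ℝ) / 2 + 1) r := by
    refine integral_congr_ae (.of_forall fun ζ ↦ ?_)
    simp only
    rw [← rpow_natCast, ← rpow_mul (norm_nonneg _)]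
    congr 1
    push_cast
    ring
  obtain ⟨hX, hZ⟩ := distPowMean_newton hn hx hr
  have hrec := distPowMean_recurrence hx ((n : ℝ) / 2) hr'
  rw [hmean, show ((n : ℝ) + 2) / 2 = n / 2 + 1 by ring,
    hyperF_add_one_two (by positivity) (by rwa [abs_of_nonneg (by positivity)])]
  rw [hX] at hrec
  set q := r ^ 2 * ‖x‖ ^ 2
  have hq : 1 - q ≠ 0 := by linarith
  rw [eq_div_iff (pow_ne_zero 3 hq)]
  generalize distPowMean x ((n : ℝ) / 2 + 1) r = M at hrec ⊢
  field_simp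
  linear_combination 2 * (1 - q) * hrec + 2 * (1 + q) * hZ
end
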